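/- arXiv:2011.09221 — 6 statements merged into one kernel-verified Lean document; each statement's English description precedes it below -/
import Mathlib

section
/- Let E ∈ ℝ^{n×N} satisfy E Q_d E^⊤ + E S_d B_d^⊤ + B_d S_d^⊤ E^⊤ + B_d R_d B_d^⊤ ⪰ 0. Then for every vector v ∈ ℝ^n with B_d^⊤ v = 0 one has E^⊤ v = 0; in particular, the column space of E is contained in the column space of B_d. -/
open Matrix

/-!
If `Bdᵀ v = 0`, evaluating the quadratic form of the hypothesis at `v` leaves only
`(Eᵀ v)ᵀ Qd (Eᵀ v) ≥ 0`, which forces `Eᵀ v = 0` since `Qd ≺ 0`. The inclusion of column spaces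
follows by duality: a vector `E w` outside the range of `Bd` would be separated from it by some
`v` with `Bdᵀ v = 0`, but then `vᵀ E w = 0`.
-/

/-- If `E` satisfies the quadratic inequality
`E Q_d Eᵀ + E S_d B_dᵀ + B_d S_dᵀ Eᵀ + B_d R_d B_dᵀ ⪰ 0` with `Q_d ≺ 0`, then every
vector `v` in the kernel of `B_dᵀ` lies in the kernel of `Eᵀ`; in particular the column
space of `E` is contained in the column space of `B_d`. -/
theorem column_space_of_E_subset_column_space_of_Bd
    (n N md : ℕ) (hn : 0 < n) (hN : 0 < N) (hmd : 0 < md)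
    (Bd : Matrix (Fin n) (Fin md) ℝ)
    (Qd : Matrix (Fin N) (Fin N) ℝ) (hQd : (-Qd).PosDef)
    (Sd : Matrix (Fin N) (Fin md) ℝ)
    (Rd : Matrix (Fin md) (Fin md) ℝ) (hRd : Rd.IsHermitian)
    (E : Matrix (Fin n) (Fin N) ℝ)
    (hE : (E * Qd * Eᵀ + E * Sd * Bdᵀ + Bd * Sdᵀ * Eᵀ + Bd * Rd * Bdᵀ).PosSemidef) :
    (∀ v : Fin n → ℝ, Bdᵀ.mulVec v = 0 → Eᵀ.mulVec v = 0) ∧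
    LinearMap.range E.mulVecLin ≤ LinearMap.range Bd.mulVecLin := by
  have key : ∀ v : Fin n → ℝ, Bdᵀ *ᵥ v = 0 → Eᵀ *ᵥ v = 0 := by
    intro v hv
    by_contra hne
    have hpos := hQd.dotProduct_mulVec_pos hne
    have hnonneg := hE.dotProduct_mulVec_nonneg v
    have hv' : v ᵥ* Bd = 0 := by rw [← mulVec_transpose, hv]
    -- Every term containing `Bd` vanishes on `v`, leaving only the `Qd` term.
    have hquad : v ⬝ᵥ ((E * Qd * Eᵀ + E * Sd * Bdᵀ + Bd * Sdᵀ * Eᵀ + Bd * Rd * Bdᵀ) *ᵥ v)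
        = (Eᵀ *ᵥ v) ⬝ᵥ (Qd *ᵥ (Eᵀ *ᵥ v)) := by
      simp only [add_mulVec, ← mulVec_mulVec, dotProduct_add, hv, mulVec_zero, dotProduct_zero,
        dotProduct_mulVec v Bd, hv', zero_dotProduct, dotProduct_mulVec v E,
        mulVec_transpose E v, add_zero]
    simp only [star_trivial, neg_mulVec, dotProduct_neg] at hpos hnonneg
    linarith
  refine ⟨key, ?_⟩
  rintro _ ⟨w, rfl⟩
  by_contra hw
  -- A functional separating `E w` from the range of `Bd` is `x ↦ v ⬝ᵥ x` for some `v`.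
  obtain ⟨f, hf, hker⟩ := Submodule.exists_le_ker_of_notMem hw
  obtain ⟨v, rfl⟩ := (dotProductEquiv ℝ (Fin n)).surjective f
  have hBv : Bdᵀ *ᵥ v = 0 := by
    rw [mulVec_transpose]
    refine dotProduct_eq_zero _ fun u => ?_
    rw [← dotProduct_mulVec]
    exact hker ⟨u, rfl⟩
  apply hf
  change v ⬝ᵥ (E *ᵥ w) = 0
  rw [dotProduct_mulVec, ← mulVec_transpose, key v hBv, zero_dotProduct]
end

section
/- Let E ∈ ℝ^{n×N} satisfy E Q_d E^⊤ + E S_d B_d^⊤ + B_d S_d^⊤ E^⊤ + B_d R_d B_d^⊤ ⪰ 0, and suppose B_d has full column rank. Then the matrix D := (B_d^⊤ B_d)^{-1} B_d^⊤ E satisfies B_d D = E and D Q_d D^⊤ + D S_d + S_d^⊤ D^⊤ + R_d ⪰ 0 (i.e. D ∈ 𝒟). Consequently, if (A,B) ∈ ℝ^{n×n} × ℝ^{n×m} satisfies the quadratic matrix inequality with E = Ẋ − A X − B U, then (A,B) ∈ Σ_c. -/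
open Matrix

/-!
Write `L = (BᵀB)⁻¹Bᵀ`, a left inverse of `B = B_d` because full column rank makes `BᵀB`
invertible, and let `M ⪰ 0` be the matrix of the quadratic inequality.

* With `P = 1 - B L` one has `P B = 0`, so conjugating by `P` kills every term of `M` containing
  `B`: `P M Pᵀ = (P E) Q_d (P E)ᵀ ⪰ 0`. As `Q_d ≺ 0`, this forces `P E = 0`, i.e. `B (L E) = E`
  (`eq_zero_of_negDef_conj`).
* As `L B = 1`, the congruence `L M Lᵀ ⪰ 0` is exactly the inequality defining `𝒟` for `D = L E`.

Applying this to `E = Ẋ - A X - B U` gives the statement about `Σ_c`.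
-/

/-- Full column rank makes `(BᵀB)⁻¹Bᵀ` a left inverse of `B`. -/
lemma leftInv_mul_of_rank {n k : ℕ} (B : Matrix (Fin n) (Fin k) ℝ) (hB : B.rank = k) :
    ((Bᵀ * B)⁻¹ * Bᵀ) * B = 1 := by
  have hunit : IsUnit (Bᵀ * B) := by
    rw [← Matrix.mulVec_surjective_iff_isUnit]
    have htop : LinearMap.range (Bᵀ * B).mulVecLin = ⊤ := by
      apply Submodule.eq_top_of_finrank_eq
      rw [Module.finrank_fin_fun]
      exact (Matrix.rank_transpose_mul_self B).trans hB
    exact LinearMap.range_eq_top.mp htop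
  rw [Matrix.mul_assoc]
  exact Matrix.nonsing_inv_mul _ ((Matrix.isUnit_iff_isUnit_det _).mp hunit)

/-- For `Q ≺ 0`, the matrix `F Q Fᵀ` is negative semidefinite, and it is positive semidefinite
only when `F = 0`. -/
lemma eq_zero_of_negDef_conj {n N : ℕ} {Q : Matrix (Fin N) (Fin N) ℝ} (hQ : (-Q).PosDef)
    {F : Matrix (Fin n) (Fin N) ℝ} (hF : (F * Q * Fᵀ).PosSemidef) : F = 0 := by
  have hker : ∀ x : Fin n → ℝ, Fᵀ *ᵥ x = 0 := by
    intro x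
    by_contra hx
    have hpos := hQ.dotProduct_mulVec_pos hx
    have hnonneg := hF.dotProduct_mulVec_nonneg x
    have hquad : x ⬝ᵥ ((F * Q * Fᵀ) *ᵥ x) = (Fᵀ *ᵥ x) ⬝ᵥ (Q *ᵥ (Fᵀ *ᵥ x)) := by
      rw [Matrix.mul_assoc, ← Matrix.mulVec_mulVec, Matrix.dotProduct_mulVec,
        ← Matrix.mulVec_transpose, ← Matrix.mulVec_mulVec]
    simp only [star_trivial, Matrix.neg_mulVec, dotProduct_neg] at hpos hnonneg
    linarith
  have htr : Fᵀ = 0 := Matrix.ext_of_mulVec_single fun i => by simp only [hker, Matrix.zero_mulVec]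
  simpa using congrArg Matrix.transpose htr

/-- The first half of the theorem, for an arbitrary left inverse `L` of `B`. -/
lemma qmi_of_leftInv {n N k : ℕ} {B : Matrix (Fin n) (Fin k) ℝ} {L : Matrix (Fin k) (Fin n) ℝ}
    (hL : L * B = 1) {Q : Matrix (Fin N) (Fin N) ℝ} (hQ : (-Q).PosDef)
    {S : Matrix (Fin N) (Fin k) ℝ} {R : Matrix (Fin k) (Fin k) ℝ} {E : Matrix (Fin n) (Fin N) ℝ}
    (hE : (E * Q * Eᵀ + E * S * Bᵀ + B * Sᵀ * Eᵀ + B * R * Bᵀ).PosSemidef) :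
    B * (L * E) = E ∧
      ((L * E) * Q * (L * E)ᵀ + (L * E) * S + Sᵀ * (L * E)ᵀ + R).PosSemidef := by
  -- Congruence by `T`, regrouped in terms of `T * E` and `T * B`.
  have hconj : ∀ {l : ℕ} (T : Matrix (Fin l) (Fin n) ℝ),
      ((T * E) * Q * (T * E)ᵀ + (T * E) * S * (T * B)ᵀ + (T * B) * Sᵀ * (T * E)ᵀ
        + (T * B) * R * (T * B)ᵀ).PosSemidef := by
    intro l T
    have h := hE.mul_mul_conjTranspose_same T
    simpa only [Matrix.conjTranspose_eq_transpose_of_trivial, Matrix.mul_add, Matrix.add_mul,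
      Matrix.transpose_mul, Matrix.mul_assoc] using h
  constructor
  · have hPB : (1 - B * L) * B = 0 := by
      rw [Matrix.sub_mul, Matrix.mul_assoc, hL, Matrix.one_mul, Matrix.mul_one, sub_self]
    have hP := hconj (1 - B * L)
    simp only [hPB, Matrix.transpose_zero, Matrix.mul_zero, Matrix.zero_mul, add_zero] at hP
    have hPE := eq_zero_of_negDef_conj hQ hP
    rw [Matrix.sub_mul, Matrix.one_mul, sub_eq_zero, Matrix.mul_assoc] at hPE
    exact hPE.symm
  · have hD := hconj L
    simpa only [hL, Matrix.transpose_one, Matrix.mul_one, Matrix.one_mul] using hD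

/-- If `E` satisfies the quadratic inequality and `B_d` has full column rank, then
`D := (B_dᵀ B_d)⁻¹ B_dᵀ E` satisfies `B_d D = E` and `D ∈ 𝒟`.  Consequently, any pair
`(A, B)` satisfying the quadratic matrix inequality with `E = Ẋ − A X − B U` belongs
to `Σ_c`. -/
theorem qmi_implies_data_consistency
    (n m N md : ℕ) (hn : 0 < n) (hm : 0 < m) (hN : 0 < N) (hmd : 0 < md)
    (Xdot X : Matrix (Fin n) (Fin N) ℝ) (U : Matrix (Fin m) (Fin N) ℝ)
    (Bd : Matrix (Fin n) (Fin md) ℝ) (hBd : Bd.rank = md)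
    (Qd : Matrix (Fin N) (Fin N) ℝ) (hQd : (-Qd).PosDef)
    (Sd : Matrix (Fin N) (Fin md) ℝ)
    (Rd : Matrix (Fin md) (Fin md) ℝ) (hRd : Rd.IsHermitian)
    (E : Matrix (Fin n) (Fin N) ℝ)
    (hE : (E * Qd * Eᵀ + E * Sd * Bdᵀ + Bd * Sdᵀ * Eᵀ + Bd * Rd * Bdᵀ).PosSemidef) :
    (Bd * ((Bdᵀ * Bd)⁻¹ * Bdᵀ * E) = E ∧
      (((Bdᵀ * Bd)⁻¹ * Bdᵀ * E) * Qd * ((Bdᵀ * Bd)⁻¹ * Bdᵀ * E)ᵀ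
        + ((Bdᵀ * Bd)⁻¹ * Bdᵀ * E) * Sd + Sdᵀ * ((Bdᵀ * Bd)⁻¹ * Bdᵀ * E)ᵀ
        + Rd).PosSemidef) ∧
    (∀ (A : Matrix (Fin n) (Fin n) ℝ) (B : Matrix (Fin n) (Fin m) ℝ),
      ((Xdot - A * X - B * U) * Qd * (Xdot - A * X - B * U)ᵀ
        + (Xdot - A * X - B * U) * Sd * Bdᵀ + Bd * Sdᵀ * (Xdot - A * X - B * U)ᵀ
        + Bd * Rd * Bdᵀ).PosSemidef →
      ∃ D : Matrix (Fin md) (Fin N) ℝ,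
        (D * Qd * Dᵀ + D * Sd + Sdᵀ * Dᵀ + Rd).PosSemidef ∧
        Xdot = A * X + B * U + Bd * D) := by
  have hL := leftInv_mul_of_rank Bd hBd
  refine ⟨qmi_of_leftInv hL hQd hE, fun A B hAB => ?_⟩
  obtain ⟨hBD, hD⟩ := qmi_of_leftInv hL hQd hAB
  refine ⟨_, hD, ?_⟩
  rw [hBD]
  abel
end

section
/- Let p, q, r, s be positive integers, let G, L ∈ ℝ^{p×q}, J ∈ ℝ^{p×r}, C ∈ ℝ^{s×q}, let λ > 0, and let P̃ ∈ ℝ^{(r+s)×(r+s)} be symmetric. Suppose that for all (ξ, w) ∈ ℝ^q × ℝ^r with (ξ, w) ≠ (0,0) one has 2 ξ^⊤ G^⊤ (L ξ + J w) + λ [w; Cξ]^⊤ P̃ [w; Cξ] < 0. Then for every Δ ∈ ℝ^{r×s} satisfying [Δ; I_s]^⊤ P̃ [Δ; I_s] ⪰ 0, the symmetric matrix G^⊤ (L + J Δ C) + (L + J Δ C)^⊤ G is negative definite. -/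
open Matrix

/-!
For `ξ ≠ 0` the strict inequality is evaluated at `w = Δ C ξ`. Then `[w; Cξ] = [Δ; I] (C ξ)`, so
the multiplier term is `λ (Cξ)ᵀ [Δ; I]ᵀ P̃ [Δ; I] (Cξ) ≥ 0`, while `L ξ + J w = (L + J Δ C) ξ`.
Hence `2 ξᵀ Gᵀ (L + J Δ C) ξ < 0`, and the left side is the quadratic form of the symmetrized
matrix at `ξ`.
-/

/-- **Full-block S-procedure with a single quadratic constraint and scalar multiplier.**
If `2 ξᵀ Gᵀ (L ξ + J w) + λ [w; Cξ]ᵀ P̃ [w; Cξ] < 0` for all nonzero `(ξ, w)`, then for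
every `Δ` with `[Δ; I]ᵀ P̃ [Δ; I] ⪰ 0` the matrix `Gᵀ(L + JΔC) + (L + JΔC)ᵀG` is
negative definite. -/
theorem full_block_S_procedure
    (p q r s : ℕ) (hp : 0 < p) (hq : 0 < q) (hr : 0 < r) (hs : 0 < s)
    (G L : Matrix (Fin p) (Fin q) ℝ) (J : Matrix (Fin p) (Fin r) ℝ)
    (C : Matrix (Fin s) (Fin q) ℝ) (lam : ℝ) (hlam : 0 < lam)
    (Pt : Matrix (Fin r ⊕ Fin s) (Fin r ⊕ Fin s) ℝ) (hPt : Pt.IsHermitian)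
    (hstrict : ∀ (ξ : Fin q → ℝ) (w : Fin r → ℝ), ¬(ξ = 0 ∧ w = 0) →
      2 * (Gᵀ.mulVec (L.mulVec ξ + J.mulVec w) ⬝ᵥ ξ)
        + lam * (Sum.elim w (C.mulVec ξ) ⬝ᵥ Pt.mulVec (Sum.elim w (C.mulVec ξ))) < 0) :
    ∀ Δ : Matrix (Fin r) (Fin s) ℝ,
      ((fromRows Δ (1 : Matrix (Fin s) (Fin s) ℝ))ᵀ * Pt
        * fromRows Δ (1 : Matrix (Fin s) (Fin s) ℝ)).PosSemidef →
      (-(Gᵀ * (L + J * Δ * C) + (L + J * Δ * C)ᵀ * G)).PosDef := by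
  intro Δ hΔ
  refine PosDef.of_dotProduct_mulVec_pos ?_ ?_
  · simp [IsHermitian, conjTranspose_eq_transpose_of_trivial, transpose_add, transpose_mul,
      add_comm, Matrix.mul_assoc]
  intro ξ hξ
  -- The hypothesis is applied to the closed-loop signal `w = Δ C ξ`, for which
  -- `[w; Cξ] = [Δ; I] (C ξ)`, so the multiplier term is nonnegative.
  have hneg := hstrict ξ (Δ *ᵥ (C *ᵥ ξ)) (fun h => hξ h.1)
  have hnonneg := hΔ.dotProduct_mulVec_nonneg (C *ᵥ ξ)
  have hstack : Sum.elim (Δ *ᵥ (C *ᵥ ξ)) (C *ᵥ ξ)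
      = fromRows Δ (1 : Matrix (Fin s) (Fin s) ℝ) *ᵥ (C *ᵥ ξ) := by
    rw [fromRows_mulVec, one_mulVec]
  rw [star_trivial, ← mulVec_mulVec, ← mulVec_mulVec, dotProduct_mulVec, vecMul_transpose,
    ← hstack] at hnonneg
  have hloop : L *ᵥ ξ + J *ᵥ (Δ *ᵥ (C *ᵥ ξ)) = (L + J * Δ * C) *ᵥ ξ := by
    simp only [add_mulVec, mulVec_mulVec, Matrix.mul_assoc]
  rw [hloop] at hneg
  generalize L + J * Δ * C = M at hneg ⊢
  have hG : ξ ⬝ᵥ (Gᵀ * M) *ᵥ ξ = Gᵀ *ᵥ (M *ᵥ ξ) ⬝ᵥ ξ := by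
    rw [← mulVec_mulVec, dotProduct_comm]
  have hM : ξ ⬝ᵥ (Mᵀ * G) *ᵥ ξ = Gᵀ *ᵥ (M *ᵥ ξ) ⬝ᵥ ξ := by
    rw [← mulVec_mulVec, dotProduct_mulVec, vecMul_transpose, mulVec_transpose,
      ← dotProduct_mulVec]
  rw [star_trivial, neg_mulVec, dotProduct_neg, add_mulVec, dotProduct_add, hG, hM]
  linarith [mul_nonneg hlam.le hnonneg]
end

section
/- Assume m_d = n, B_d ∈ ℝ^{n×n} is invertible, S_d = 0, Z has full row rank, Q_d ≺ 0, and the data are generated by the true system: Ẋ = A₀ X + B₀ U + B_d D̂ for some A₀ ∈ ℝ^{n×n}, B₀ ∈ ℝ^{n×m} and some D̂ ∈ ℝ^{n×N} satisfying D̂ Q_d D̂^⊤ + R_d ≻ 0. Then the symmetric matrix P_c ∈ ℝ^{(2n+m)×(2n+m)} is invertible and has exactly n positive eigenvalues counted with multiplicity (i.e., the inertia assumption of the main theorems holds). -/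
/-!
`P_c` is the symmetric matrix of the quadratic form
`(z, w) ↦ (Zᵀz - Ẋᵀw)ᵀ Q_d (Zᵀz - Ẋᵀw) + (B_dᵀw)ᵀ R_d (B_dᵀw)`. It is negative definite on the
`(n+m)`-dimensional subspace `w = 0`, where it restricts to `Z Q_d Zᵀ`. On the `n`-dimensional
graph `z = [A₀ B₀]ᵀ w` the residual `Zᵀz - Ẋᵀw` equals `-(B_d D̂)ᵀ w`, so the form restricts to
`B_d (D̂ Q_d D̂ᵀ + R_d) B_dᵀ`, which is positive definite.

A subspace on which a symmetric matrix is positive definite has dimension at most the number of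
positive eigenvalues (`card_le_card_of_posDef`, `card_le_card_pos_eigenvalues`), and likewise for
negative. Since the two dimensions add up to `2n+m`, both bounds are equalities and no
eigenvalue vanishes.
-/

open Matrix

/-- The dimension bound behind Sylvester's law of inertia: if the form `∑ lam i * y i ^ 2` is
positive definite along `T`, then projecting to the coordinates with `0 < lam i` is
injective on the coefficient vectors `v` of `T *ᵥ v`, since the form is nonpositive where these coordinates vanish. -/
theorem card_le_card_of_posDef {ι κ : Type*} [Fintype ι] [DecidableEq ι] [Fintype κ]
    (lam : ι → ℝ) (T : Matrix ι κ ℝ) (h : (Tᵀ * diagonal lam * T).PosDef) :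
    Fintype.card κ ≤ (Finset.univ.filter fun i => 0 < lam i).card := by
  let f : (κ → ℝ) →ₗ[ℝ] ({i // 0 < lam i} → ℝ) :=
    (LinearMap.funLeft ℝ ℝ Subtype.val).comp T.mulVecLin
  have hf : Function.Injective f := by
    rw [← LinearMap.ker_eq_bot, LinearMap.ker_eq_bot']
    intro v hv
    by_contra hv0
    have hpos := h.dotProduct_mulVec_pos hv0
    have hform : star v ⬝ᵥ ((Tᵀ * diagonal lam * T) *ᵥ v) = ∑ i, lam i * (T *ᵥ v) i ^ 2 := by
      rw [star_trivial, ← mulVec_mulVec, ← mulVec_mulVec, dotProduct_mulVec, vecMul_transpose]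
      simp only [dotProduct, mulVec_diagonal]
      exact Finset.sum_congr rfl fun i _ => by ring
    rw [hform] at hpos
    refine absurd hpos (not_lt.mpr (Finset.sum_nonpos fun i _ => ?_))
    by_cases hi : 0 < lam i
    · have h0 : (T *ᵥ v) i = 0 := congrFun hv ⟨i, hi⟩
      simp [h0]
    · exact mul_nonpos_of_nonpos_of_nonneg (not_lt.mp hi) (sq_nonneg _)
  have hle := LinearMap.finrank_le_finrank_of_injective hf
  simpa [Fintype.card_subtype] using hle

theorem transpose_mul_mul_eq_diagonal {ι κ : Type*} [Fintype ι] [DecidableEq ι] [Fintype κ]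
    {P : Matrix ι ι ℝ} (hP : P.IsHermitian) (T : Matrix ι κ ℝ) :
    Tᵀ * P * T = ((hP.eigenvectorUnitary : Matrix ι ι ℝ)ᵀ * T)ᵀ * diagonal hP.eigenvalues *
      ((hP.eigenvectorUnitary : Matrix ι ι ℝ)ᵀ * T) := by
  have h : P = (hP.eigenvectorUnitary : Matrix ι ι ℝ) * diagonal hP.eigenvalues *
      (hP.eigenvectorUnitary : Matrix ι ι ℝ)ᵀ := hP.spectral_theorem
  conv_lhs => rw [h]
  simp only [transpose_mul, transpose_transpose, Matrix.mul_assoc]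

theorem card_le_card_pos_eigenvalues {ι κ : Type*} [Fintype ι] [DecidableEq ι] [Fintype κ]
    {P : Matrix ι ι ℝ} (hP : P.IsHermitian) (T : Matrix ι κ ℝ) (h : (Tᵀ * P * T).PosDef) :
    Fintype.card κ ≤ (Finset.univ.filter fun i => 0 < hP.eigenvalues i).card :=
  card_le_card_of_posDef _ _ (transpose_mul_mul_eq_diagonal hP T ▸ h)

theorem card_le_card_neg_eigenvalues {ι κ : Type*} [Fintype ι] [DecidableEq ι] [Fintype κ]
    {P : Matrix ι ι ℝ} (hP : P.IsHermitian) (T : Matrix ι κ ℝ) (h : (-(Tᵀ * P * T)).PosDef) :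
    Fintype.card κ ≤ (Finset.univ.filter fun i => hP.eigenvalues i < 0).card := by
  rw [transpose_mul_mul_eq_diagonal hP T] at h
  have h' := card_le_card_of_posDef (fun i => -hP.eigenvalues i)
    ((hP.eigenvectorUnitary : Matrix ι ι ℝ)ᵀ * T)
    (by rw [← diagonal_neg]; simpa only [Matrix.mul_neg, Matrix.neg_mul] using h)
  simpa using h'

/-- If `P` is positive definite along `T₁`, negative definite along `T₂`, and the two dimensions
add up to the full one, then `P` is invertible with as many positive eigenvalues as columns
of `T₁`. -/
theorem isUnit_det_and_card_pos_eigenvalues {ι κ₁ κ₂ : Type*} [Fintype ι] [DecidableEq ι]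
    [Fintype κ₁] [Fintype κ₂] {P : Matrix ι ι ℝ} (hP : P.IsHermitian)
    (T₁ : Matrix ι κ₁ ℝ) (T₂ : Matrix ι κ₂ ℝ)
    (h₁ : (T₁ᵀ * P * T₁).PosDef) (h₂ : (-(T₂ᵀ * P * T₂)).PosDef)
    (hcard : Fintype.card ι = Fintype.card κ₁ + Fintype.card κ₂) :
    IsUnit P.det ∧
      (Finset.univ.filter fun i => 0 < hP.eigenvalues i).card = Fintype.card κ₁ := by
  have hpos := card_le_card_pos_eigenvalues hP T₁ h₁
  have hneg := card_le_card_neg_eigenvalues hP T₂ h₂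
  have hdisj : Disjoint (Finset.univ.filter fun i => 0 < hP.eigenvalues i)
      (Finset.univ.filter fun i => hP.eigenvalues i < 0) :=
    Finset.disjoint_filter.mpr fun i _ h => not_lt.mpr h.le
  have hunion := Finset.card_union_of_disjoint hdisj
  have hle := Finset.card_le_univ ((Finset.univ.filter fun i => 0 < hP.eigenvalues i) ∪
      (Finset.univ.filter fun i => hP.eigenvalues i < 0))
  refine ⟨?_, by omega⟩
  have huniv := (Finset.card_eq_iff_eq_univ _).mp (le_antisymm hle (by omega))
  rw [hP.det_eq_prod_eigenvalues, isUnit_iff_ne_zero, Finset.prod_ne_zero_iff]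
  intro i _ h0
  have hi := huniv ▸ Finset.mem_univ i
  have h0' : hP.eigenvalues i = 0 := by simpa using h0
  simp [h0'] at hi

theorem vecMul_injective_of_rank_eq {ι κ : Type*} [Fintype ι] [Fintype κ]
    (Z : Matrix ι κ ℝ) (h : Z.rank = Fintype.card ι) : Function.Injective Z.vecMul := by
  rw [vecMul_injective_iff, linearIndependent_iff_card_eq_finrank_span, ← h,
    rank_eq_finrank_span_row]
  rfl

/-- **Satisfaction of the inertia assumption (Appendix B).**  If `m_d = n`, `B_d` is
invertible, `S_d = 0`, `Z = [X; U]` has full row rank, `Q_d ≺ 0`, and the data are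
generated by the true system with a disturbance `D̂` satisfying `D̂ Q_d D̂ᵀ + R_d ≻ 0`,
then `P_c` is invertible and has exactly `n` positive eigenvalues. -/
theorem inertia_assumption_holds
    (n m N : ℕ) (hn : 0 < n) (hm : 0 < m) (hN : 0 < N)
    (Xdot X : Matrix (Fin n) (Fin N) ℝ) (U : Matrix (Fin m) (Fin N) ℝ)
    (Bd : Matrix (Fin n) (Fin n) ℝ) (hBd : IsUnit Bd)
    (Qd : Matrix (Fin N) (Fin N) ℝ) (hQd : (-Qd).PosDef)
    (Rd : Matrix (Fin n) (Fin n) ℝ) (hRd : Rd.IsHermitian)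
    (Z : Matrix (Fin n ⊕ Fin m) (Fin N) ℝ) (hZ : Z = fromRows X U)
    (hZrank : Z.rank = n + m)
    (A0 : Matrix (Fin n) (Fin n) ℝ) (B0 : Matrix (Fin n) (Fin m) ℝ)
    (Dhat : Matrix (Fin n) (Fin N) ℝ)
    (hdata : Xdot = A0 * X + B0 * U + Bd * Dhat)
    (hDhat : (Dhat * Qd * Dhatᵀ + Rd).PosDef)
    (Qc : Matrix (Fin n ⊕ Fin m) (Fin n ⊕ Fin m) ℝ) (hQc : Qc = Z * Qd * Zᵀ)
    (Sc : Matrix (Fin n ⊕ Fin m) (Fin n) ℝ) (hSc : Sc = -(Z * Qd * Xdotᵀ))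
    (Rc : Matrix (Fin n) (Fin n) ℝ) (hRc : Rc = Xdot * Qd * Xdotᵀ + Bd * Rd * Bdᵀ)
    (Pc : Matrix ((Fin n ⊕ Fin m) ⊕ Fin n) ((Fin n ⊕ Fin m) ⊕ Fin n) ℝ)
    (hPc : Pc = fromBlocks Qc Sc Scᵀ Rc) :
    ∃ hH : Pc.IsHermitian, IsUnit Pc.det ∧
      (Finset.univ.filter fun i => 0 < hH.eigenvalues i).card = n := by
  have hQdT : Qdᵀ = Qd := by
    have h := hQd.isHermitian.eq
    simpa using h
  have hRdT : Rdᵀ = Rd := by simpa using hRd.eq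
  have hH : Pc.IsHermitian := by
    rw [hPc, hQc, hSc, hRc]
    change _ᵀ = _
    simp [fromBlocks_transpose, transpose_mul, hQdT, hRdT, Matrix.mul_assoc]
  refine ⟨hH, ?_⟩
  have hXdot : Xdot = fromCols A0 B0 * Z + Bd * Dhat := by
    rw [hdata, hZ, fromCols_mul_fromRows]
  -- The columns of `T₁` span the graph `z = [A₀ B₀]ᵀ w`.
  let T₁ : Matrix ((Fin n ⊕ Fin m) ⊕ Fin n) (Fin n) ℝ := fromRows (fromCols A0 B0)ᵀ 1
  have h₁ : (T₁ᵀ * Pc * T₁).PosDef := by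
    have hrestr : T₁ᵀ * Pc * T₁ = Bd * (Dhat * Qd * Dhatᵀ + Rd) * Bdᵀ := by
      simp only [T₁]
      rw [hPc, hQc, hSc, hRc, hXdot]
      generalize fromCols A0 B0 = W
      simp only [transpose_fromRows, fromCols_mul_fromBlocks, fromCols_mul_fromRows,
        transpose_transpose, transpose_one, transpose_neg, transpose_mul, transpose_add, hQdT,
        Matrix.mul_add, Matrix.add_mul, Matrix.mul_neg, Matrix.neg_mul, Matrix.one_mul,
        Matrix.mul_one, Matrix.mul_assoc]
      abel
    rw [hrestr]
    exact hDhat.mul_mul_conjTranspose_same (vecMul_injective_iff_isUnit.mpr hBd)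
  -- The columns of `T₂` span the subspace `w = 0`.
  let T₂ : Matrix ((Fin n ⊕ Fin m) ⊕ Fin n) (Fin n ⊕ Fin m) ℝ := fromRows 1 0
  have h₂ : (-(T₂ᵀ * Pc * T₂)).PosDef := by
    have hrestr : -(T₂ᵀ * Pc * T₂) = Z * (-Qd) * Zᵀ := by
      rw [hPc, hQc]
      simp only [T₂, transpose_fromRows, fromCols_mul_fromBlocks, fromCols_mul_fromRows]
      simp
    rw [hrestr]
    exact hQd.mul_mul_conjTranspose_same (vecMul_injective_of_rank_eq Z (by simpa using hZrank))
  have hmain := isUnit_det_and_card_pos_eigenvalues hH _ _ h₁ h₂ (by simp; omega)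
  simpa only [Fintype.card_fin] using hmain
end

section
/- Assume S_d = 0, Z has full row rank, and Ẋ = A₀ X + B₀ U + B_d D̂ for some A₀ ∈ ℝ^{n×n}, B₀ ∈ ℝ^{n×m}, and D̂ ∈ ℝ^{m_d×N}. Then (Z Q_d Z^⊤ is invertible and) R_c − S_c^⊤ Q_c^{-1} S_c ≻ 0 if and only if B_d R_d B_d^⊤ ≻ B_d D̂ (Q_d Z^⊤ (Z Q_d Z^⊤)^{-1} Z Q_d − Q_d) D̂^⊤ B_d^⊤. -/
/-!
Write `K = Z Q Zᵀ` and `P = Q Zᵀ K⁻¹ Z Q - Q`. Full row rank of `Z` makes `-K` positive definite,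
so `K` is invertible; hence `Z P = 0` and `P Zᵀ = 0`. The Schur complement equals
`B_d R_d B_dᵀ - Ẋ P Ẋᵀ`, and since `Ẋ = [A₀ B₀] Z + B_d D̂`, the annihilation identities reduce
`Ẋ P Ẋᵀ` to `B_d D̂ P D̂ᵀ B_dᵀ`. The two matrices in the equivalence are therefore equal.
-/

open Matrix

/-- Full row rank makes `v ↦ v Z` injective, so the congruence `Z (-Q) Zᵀ` stays definite. -/
lemma isUnit_det_mul_mul_transpose {ι κ : Type*} [Fintype ι] [DecidableEq ι] [Fintype κ]
    (Z : Matrix ι κ ℝ) (Q : Matrix κ κ ℝ) (hQ : (-Q).PosDef)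
    (hZ : Z.rank = Fintype.card ι) : IsUnit (Z * Q * Zᵀ).det := by
  have hrow : LinearIndependent ℝ Z.row := by
    rw [linearIndependent_iff_card_eq_finrank_span, ← hZ, Matrix.rank_eq_finrank_span_row]
    rfl
  have hpos := hQ.mul_mul_conjTranspose_same (Matrix.vecMul_injective_iff.mpr hrow)
  rw [conjTranspose_eq_transpose_of_trivial, Matrix.mul_neg, Matrix.neg_mul] at hpos
  have hu := hpos.isUnit.neg
  rw [neg_neg] at hu
  exact (Matrix.isUnit_iff_isUnit_det _).mp hu

/-- `P = Q Zᵀ (Z Q Zᵀ)⁻¹ Z Q - Q` is annihilated by `Z` on both sides, so a summand `W Z` drops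
out of the quadratic form `Y ↦ Y P Yᵀ`. -/
lemma mul_annihilated_mul_transpose {ι κ l : Type*} [Fintype ι] [DecidableEq ι] [Fintype κ]
    (Z : Matrix ι κ ℝ) (Q : Matrix κ κ ℝ) (hK : IsUnit (Z * Q * Zᵀ).det)
    (W : Matrix l ι ℝ) (E : Matrix l κ ℝ) :
    (W * Z + E) * (Q * Zᵀ * (Z * Q * Zᵀ)⁻¹ * Z * Q - Q) * (W * Z + E)ᵀ
      = E * (Q * Zᵀ * (Z * Q * Zᵀ)⁻¹ * Z * Q - Q) * Eᵀ := by
  have hL : Z * (Q * Zᵀ * (Z * Q * Zᵀ)⁻¹ * Z * Q - Q) = 0 := by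
    have h : Z * (Q * Zᵀ * (Z * Q * Zᵀ)⁻¹ * Z * Q)
        = (Z * Q * Zᵀ) * (Z * Q * Zᵀ)⁻¹ * (Z * Q) := by
      simp only [Matrix.mul_assoc]
    rw [Matrix.mul_sub, h, Matrix.mul_nonsing_inv _ hK, Matrix.one_mul, sub_self]
  have hR : (Q * Zᵀ * (Z * Q * Zᵀ)⁻¹ * Z * Q - Q) * Zᵀ = 0 := by
    have h : Q * Zᵀ * (Z * Q * Zᵀ)⁻¹ * Z * Q * Zᵀ
        = (Q * Zᵀ) * ((Z * Q * Zᵀ)⁻¹ * (Z * Q * Zᵀ)) := by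
      simp only [Matrix.mul_assoc]
    rw [Matrix.sub_mul, h, Matrix.nonsing_inv_mul _ hK, Matrix.mul_one, sub_self]
  generalize Q * Zᵀ * (Z * Q * Zᵀ)⁻¹ * Z * Q - Q = P at hL hR ⊢
  rw [Matrix.add_mul, Matrix.mul_assoc W, hL, Matrix.mul_zero, zero_add, transpose_add,
    transpose_mul, Matrix.mul_add, Matrix.mul_assoc E P, ← Matrix.mul_assoc P, hR,
    Matrix.zero_mul, Matrix.mul_zero, zero_add]

/-- **Appendix B, Schur complement characterization.**  With `S_d = 0`, `Z = [X; U]` of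
full row rank, and data generated as `Ẋ = A₀ X + B₀ U + B_d D̂`, the matrix
`Z Q_d Zᵀ` is invertible and `R_c − S_cᵀ Q_c⁻¹ S_c ≻ 0` holds iff
`B_d R_d B_dᵀ ≻ B_d D̂ (Q_d Zᵀ (Z Q_d Zᵀ)⁻¹ Z Q_d − Q_d) D̂ᵀ B_dᵀ`. -/
theorem schur_complement_characterization
    (n m N md : ℕ) (hn : 0 < n) (hm : 0 < m) (hN : 0 < N) (hmd : 0 < md)
    (Xdot X : Matrix (Fin n) (Fin N) ℝ) (U : Matrix (Fin m) (Fin N) ℝ)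
    (Bd : Matrix (Fin n) (Fin md) ℝ)
    (Qd : Matrix (Fin N) (Fin N) ℝ) (hQd : (-Qd).PosDef)
    (Rd : Matrix (Fin md) (Fin md) ℝ) (hRd : Rd.IsHermitian)
    (Z : Matrix (Fin n ⊕ Fin m) (Fin N) ℝ) (hZ : Z = fromRows X U)
    (hZrank : Z.rank = n + m)
    (A0 : Matrix (Fin n) (Fin n) ℝ) (B0 : Matrix (Fin n) (Fin m) ℝ)
    (Dhat : Matrix (Fin md) (Fin N) ℝ)
    (hdata : Xdot = A0 * X + B0 * U + Bd * Dhat)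
    (Qc : Matrix (Fin n ⊕ Fin m) (Fin n ⊕ Fin m) ℝ) (hQc : Qc = Z * Qd * Zᵀ)
    (Sc : Matrix (Fin n ⊕ Fin m) (Fin n) ℝ) (hSc : Sc = -(Z * Qd * Xdotᵀ))
    (Rc : Matrix (Fin n) (Fin n) ℝ) (hRc : Rc = Xdot * Qd * Xdotᵀ + Bd * Rd * Bdᵀ) :
    IsUnit (Z * Qd * Zᵀ).det ∧
    ((Rc - Scᵀ * Qc⁻¹ * Sc).PosDef ↔
      (Bd * Rd * Bdᵀ
        - Bd * Dhat * (Qd * Zᵀ * (Z * Qd * Zᵀ)⁻¹ * Z * Qd - Qd) * Dhatᵀ * Bdᵀ).PosDef) := by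
  have hK : IsUnit (Z * Qd * Zᵀ).det :=
    isUnit_det_mul_mul_transpose Z Qd hQd (by simpa using hZrank)
  refine ⟨hK, ?_⟩
  have hQdT : Qdᵀ = Qd := by
    have h := hQd.isHermitian.eq
    rw [conjTranspose_eq_transpose_of_trivial, transpose_neg] at h
    exact neg_injective h
  have hX : Xdot = fromCols A0 B0 * Z + Bd * Dhat := by
    rw [hdata, hZ, fromCols_mul_fromRows]
  have key := mul_annihilated_mul_transpose Z Qd hK (fromCols A0 B0) (Bd * Dhat)
  rw [← hX, transpose_mul, ← Matrix.mul_assoc] at key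
  have hSchur : Rc - Scᵀ * Qc⁻¹ * Sc = Bd * Rd * Bdᵀ
      - Xdot * (Qd * Zᵀ * (Z * Qd * Zᵀ)⁻¹ * Z * Qd - Qd) * Xdotᵀ := by
    rw [hRc, hSc, hQc]
    simp only [transpose_neg, transpose_mul, transpose_transpose, hQdT, Matrix.neg_mul,
      Matrix.mul_neg, neg_neg, Matrix.mul_sub, Matrix.sub_mul, Matrix.mul_assoc]
    abel
  rw [hSchur, key]
end

section
/- Let A ∈ ℝ^{n×n}, v ∈ ℝ^n, h > 0, ā > 0 with ‖A‖ ≤ ā (operator norm induced by the Euclidean norm), and let x : ℝ → ℝ^n satisfy, for every t ∈ [0, h], that x is differentiable at t with x'(t) = A x(t) + v. Then the Euler difference quotient satisfies the error bound ‖(x(h) − x(0))/h − (A x(0) + v)‖ ≤ ((e^{āh} − 1 − āh)/(āh)) · (ā‖x(0)‖ + ‖v‖). -/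
/-!
Put `w = A x(0) + v`, so `‖w‖ ≤ C := ā‖x(0)‖ + ‖v‖`. The increment `y(t) = x(t) - x(0)` solves
`y' = A y + w`, `y(0) = 0`, and Grönwall's inequality gives `‖y(t)‖ ≤ (C/ā)(e^{āt} - 1)`.
The Euler remainder `r(t) = y(t) - t w` has `r' = A y`, hence `‖r'(t)‖ ≤ C (e^{āt} - 1)`, and the
mean value inequality yields `‖r(t)‖ ≤ C ((e^{āt} - 1)/ā - t)`. Dividing by `h` at `t = h` is the
claim. This replaces the matrix exponential series by two differential inequalities.
-/

/-- **Euler derivative-estimation error bound (Appendix A).**  If `x` solves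
`x'(t) = A x(t) + v` on `[0, h]` with `‖A‖ ≤ ā` (operator norm induced by the
Euclidean norm), then the forward-difference estimate of the derivative satisfies
`‖(x(h) − x(0))/h − (A x(0) + v)‖ ≤ ((e^{āh} − 1 − āh)/(āh)) (ā‖x(0)‖ + ‖v‖)`. -/
theorem euler_derivative_estimation_error_bound
    (n : ℕ) (hn : 0 < n)
    (A : EuclideanSpace ℝ (Fin n) →L[ℝ] EuclideanSpace ℝ (Fin n))
    (v : EuclideanSpace ℝ (Fin n))
    (h abar : ℝ) (hh : 0 < h) (habar : 0 < abar) (hA : ‖A‖ ≤ abar)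
    (x : ℝ → EuclideanSpace ℝ (Fin n))
    (hx : ∀ t ∈ Set.Icc (0 : ℝ) h, HasDerivAt x (A (x t) + v) t) :
    ‖(1 / h) • (x h - x 0) - (A (x 0) + v)‖ ≤
      ((Real.exp (abar * h) - 1 - abar * h) / (abar * h)) * (abar * ‖x 0‖ + ‖v‖) := by
  set w := A (x 0) + v with hw
  set C := abar * ‖x 0‖ + ‖v‖ with hC
  have hwC : ‖w‖ ≤ C :=
    (norm_add_le _ _).trans (add_le_add_left (A.le_of_opNorm_le hA _) _)
  have hy : ∀ t ∈ Set.Icc (0 : ℝ) h,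
      HasDerivAt (fun s => x s - x 0) (A (x t - x 0) + w) t := by
    intro t ht
    refine ((hx t ht).sub_const (x 0)).congr_deriv ?_
    rw [hw, map_sub]
    abel
  have hygrowth : ∀ t ∈ Set.Icc (0 : ℝ) h,
      ‖x t - x 0‖ ≤ C / abar * (Real.exp (abar * t) - 1) := by
    intro t ht
    have key := norm_le_gronwallBound_of_norm_deriv_right_le (δ := 0) (K := abar) (ε := C)
      (f := fun s => x s - x 0) (f' := fun s => A (x s - x 0) + w)
      (fun s hs => (hy s hs).continuousAt.continuousWithinAt)
      (fun s hs => (hy s (Set.Ico_subset_Icc_self hs)).hasDerivWithinAt)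
      (by simp)
      (fun s _ => (norm_add_le _ _).trans (add_le_add (A.le_of_opNorm_le hA _) hwC)) t ht
    simpa [gronwallBound_of_K_ne_0 habar.ne'] using key
  have hr : ∀ t ∈ Set.Icc (0 : ℝ) h,
      HasDerivAt (fun s => x s - x 0 - s • w) (A (x t - x 0)) t := by
    intro t ht
    refine ((hy t ht).sub ((hasDerivAt_id t).smul_const w)).congr_deriv ?_
    simp
  have hB : ∀ t : ℝ, HasDerivAt (fun s => C * ((Real.exp (abar * s) - 1) / abar - s))
      (C * (Real.exp (abar * t) - 1)) t := by
    intro t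
    have he : HasDerivAt (fun s => Real.exp (abar * s)) (Real.exp (abar * t) * abar) t := by
      simpa using ((hasDerivAt_id t).const_mul abar).exp
    refine ((((he.sub_const 1).div_const abar).sub (hasDerivAt_id t)).const_mul C).congr_deriv ?_
    field_simp
  have hrem : ‖x h - x 0 - h • w‖ ≤ C * ((Real.exp (abar * h) - 1) / abar - h) := by
    refine image_norm_le_of_norm_deriv_right_le_deriv_boundary
      (f := fun s => x s - x 0 - s • w) (f' := fun s => A (x s - x 0))
      (fun s hs => (hr s hs).continuousAt.continuousWithinAt)
      (fun s hs => (hr s (Set.Ico_subset_Icc_self hs)).hasDerivWithinAt)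
      (by simp) hB (fun s hs => ?_) (Set.right_mem_Icc.mpr hh.le)
    calc ‖A (x s - x 0)‖ ≤ abar * ‖x s - x 0‖ := A.le_of_opNorm_le hA _
      _ ≤ abar * (C / abar * (Real.exp (abar * s) - 1)) :=
        mul_le_mul_of_nonneg_left (hygrowth s (Set.Ico_subset_Icc_self hs)) habar.le
      _ = C * (Real.exp (abar * s) - 1) := by field_simp
  have hquot : (1 / h) • (x h - x 0) - w = (1 / h) • (x h - x 0 - h • w) := by
    rw [smul_sub (1 / h) (x h - x 0), smul_smul, one_div_mul_cancel hh.ne', one_smul]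
  rw [hquot, norm_smul, Real.norm_of_nonneg (by positivity)]
  calc 1 / h * ‖x h - x 0 - h • w‖
      ≤ 1 / h * (C * ((Real.exp (abar * h) - 1) / abar - h)) :=
        mul_le_mul_of_nonneg_left hrem (by positivity)
    _ = (Real.exp (abar * h) - 1 - abar * h) / (abar * h) * C := by field_simp
end
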